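/- Let a < b be real numbers and 1 < α < 2. Let σ̲, σ̄ : [a,b] → ℝ be functions in C¹[a,b] with absolutely continuous first derivatives, twice differentiable on (a,b), such that σ̲(t) ≤ σ̄(t) for all t ∈ [a,b]. Let E = {(t,x) ∈ [a,b] × ℝ : σ̲(t) ≤ x ≤ σ̄(t)} and let f : [a,b] × ℝ → ℝ be continuous on E. Assume σ̲ is a lower solution: (t−a)^{2−α}·σ̲''(t) + f(t, σ̲(t)) ≥ 0 for all t ∈ (a,b), σ̲(a) ≤ 0, σ̲(b) ≤ 0; and σ̄ is an upper solution: (t−a)^{2−α}·σ̄''(t) + f(t, σ̄(t)) ≤ 0 for all t ∈ (a,b), σ̄(a) ≥ 0, σ̄(b) ≥ 0. Then there exists a function u : [a,b] → ℝ in C¹[a,b] with u' absolutely continuous, twice differentiable on (a,b), such that (t−a)^{2−α}·u''(t) + f(t, u(t)) = 0 for all t ∈ (a,b), u(a) = u(b) = 0, and σ̲(t) ≤ u(t) ≤ σ̄(t) for all t ∈ [a,b]. -/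

import Mathlib

open Set Filter Topology MeasureTheory intervalIntegral

noncomputable def Gop (a : ℝ) (w : ℝ → ℝ) (F : ℝ → ℝ → ℝ) (v : ℝ → ℝ) (τ : ℝ) : ℝ :=
  ∫ r in a..τ, w r * F r (v r)

noncomputable def Jop (a : ℝ) (w : ℝ → ℝ) (F : ℝ → ℝ → ℝ) (s : ℝ) (v : ℝ → ℝ) (t : ℝ) : ℝ :=
  ∫ τ in a..t, (s - Gop a w F v τ)

lemma g_integrable {w : ℝ → ℝ} (hw : Integrable w) {F : ℝ → ℝ → ℝ}
    (hF : Continuous (fun p : ℝ × ℝ => F p.1 p.2)) {M : ℝ} (hM : ∀ t x, |F t x| ≤ M)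
    {v : ℝ → ℝ} (hv : Continuous v) : Integrable (fun r => w r * F r (v r)) := by
  apply hw.mul_bdd (c := M)
  · exact (hF.comp (continuous_id.prodMk hv)).aestronglyMeasurable
  · exact Eventually.of_forall fun x => hM _ _

lemma Gop_cont (a : ℝ) {w : ℝ → ℝ} (hw : Integrable w) {F : ℝ → ℝ → ℝ}
    (hF : Continuous (fun p : ℝ × ℝ => F p.1 p.2)) {M : ℝ} (hM : ∀ t x, |F t x| ≤ M)
    {v : ℝ → ℝ} (hv : Continuous v) : Continuous (Gop a w F v) :=
  intervalIntegral.continuous_primitive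
    (fun _ _ => (g_integrable hw hF hM hv).intervalIntegrable) a

lemma Gop_bound (a : ℝ) {w : ℝ → ℝ} (hw : Integrable w) {F : ℝ → ℝ → ℝ}
    (hF : Continuous (fun p : ℝ × ℝ => F p.1 p.2)) {M : ℝ} (hM : ∀ t x, |F t x| ≤ M)
    {v : ℝ → ℝ} (hv : Continuous v) (τ : ℝ) : |Gop a w F v τ| ≤ M * ∫ r, |w r| := by
  have h1 : |Gop a w F v τ| ≤ ∫ r in uIoc a τ, |w r * F r (v r)| :=
    intervalIntegral.norm_integral_le_integral_norm_uIoc (f := fun r => w r * F r (v r))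
  have hi := (g_integrable hw hF hM hv).abs
  have h2 : ∫ r in uIoc a τ, |w r * F r (v r)| ≤ ∫ r, |w r * F r (v r)| :=
    setIntegral_le_integral hi (Eventually.of_forall fun x => abs_nonneg _)
  have h3 : ∫ r, |w r * F r (v r)| ≤ ∫ r, M * |w r| := by
    apply integral_mono hi (hw.abs.const_mul M)
    intro r
    simp only [abs_mul]
    rw [mul_comm]
    exact mul_le_mul_of_nonneg_right (hM _ _) (abs_nonneg _)
  rw [MeasureTheory.integral_const_mul] at h3
  linarith

lemma Jop_hasDeriv (a : ℝ) {w : ℝ → ℝ} (hw : Integrable w) {F : ℝ → ℝ → ℝ}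
    (hF : Continuous (fun p : ℝ × ℝ => F p.1 p.2)) {M : ℝ} (hM : ∀ t x, |F t x| ≤ M)
    {v : ℝ → ℝ} (hv : Continuous v) (s t : ℝ) :
    HasDerivAt (Jop a w F s v) (s - Gop a w F v t) t := by
  have hc : Continuous (fun τ => s - Gop a w F v τ) :=
    continuous_const.sub (Gop_cont a hw hF hM hv)
  exact intervalIntegral.integral_hasDerivAt_right (hc.intervalIntegrable _ _)
    (hc.stronglyMeasurableAtFilter _ _) hc.continuousAt

lemma Jop_cont (a : ℝ) {w : ℝ → ℝ} (hw : Integrable w) {F : ℝ → ℝ → ℝ}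
    (hF : Continuous (fun p : ℝ × ℝ => F p.1 p.2)) {M : ℝ} (hM : ∀ t x, |F t x| ≤ M)
    {v : ℝ → ℝ} (hv : Continuous v) (s : ℝ) : Continuous (Jop a w F s v) :=
  continuous_iff_continuousAt.2 fun t => (Jop_hasDeriv a hw hF hM hv s t).continuousAt

lemma Jop_tendsto {ι : Type*} {l : Filter ι} [l.IsCountablyGenerated]
    (a : ℝ) {w : ℝ → ℝ} (hw : Integrable w) {F : ℝ → ℝ → ℝ}
    (hF : Continuous (fun p : ℝ × ℝ => F p.1 p.2)) {M : ℝ} (hM : ∀ t x, |F t x| ≤ M)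
    {v : ι → ℝ → ℝ} {v0 : ℝ → ℝ} (hv : ∀ i, Continuous (v i)) {s : ι → ℝ} {s0 : ℝ}
    (hs : Tendsto s l (𝓝 s0)) {t : ℝ} (hat : a ≤ t)
    (h : ∀ r ∈ Icc a t, Tendsto (fun i => v i r) l (𝓝 (v0 r))) :
    Tendsto (fun i => Jop a w F (s i) (v i) t) l (𝓝 (Jop a w F s0 v0 t)) := by
  unfold Jop
  have hev : ∀ᶠ i in l, |s i| ≤ |s0| + 1 :=
    (hs.abs.eventually (gt_mem_nhds (lt_add_one _))).mono fun i hi => hi.le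
  apply intervalIntegral.tendsto_integral_filter_of_dominated_convergence
    (fun _ => |s0| + 1 + M * ∫ r, |w r|)
  · exact Eventually.of_forall fun i =>
      (continuous_const.sub (Gop_cont a hw hF hM (hv i))).aestronglyMeasurable
  · filter_upwards [hev] with i hi
    refine Eventually.of_forall fun τ _ => ?_
    have := Gop_bound a hw hF hM (hv i) τ
    rw [Real.norm_eq_abs]
    exact (abs_sub _ _).trans (add_le_add hi this)
  · exact intervalIntegrable_const
  · refine Eventually.of_forall fun τ hτ => ?_
    rw [uIoc_of_le hat] at hτ
    refine hs.sub ?_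
    unfold Gop
    apply intervalIntegral.tendsto_integral_filter_of_dominated_convergence
      (fun r => M * |w r|)
    · exact Eventually.of_forall fun i =>
        (g_integrable hw hF hM (hv i)).aestronglyMeasurable.restrict
    · refine Eventually.of_forall fun i => Eventually.of_forall fun r _ => ?_
      rw [Real.norm_eq_abs, abs_mul, mul_comm]
      exact mul_le_mul_of_nonneg_right (hM _ _) (abs_nonneg _)
    · exact (hw.abs.const_mul M).intervalIntegrable
    · refine Eventually.of_forall fun r hr => ?_
      rw [uIoc_of_le hτ.1.le] at hr
      refine Tendsto.const_mul _ ?_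
      exact (hF.tendsto (r, v0 r)).comp
        (tendsto_const_nhds.prodMk_nhds (h r ⟨hr.1.le, hr.2.trans hτ.2⟩))

lemma Jop_congr (a : ℝ) (w : ℝ → ℝ) (F : ℝ → ℝ → ℝ) (s : ℝ) {v v' : ℝ → ℝ} {t : ℝ} (hat : a ≤ t)
    (h : ∀ r ∈ Icc a t, v r = v' r) : Jop a w F s v t = Jop a w F s v' t := by
  unfold Jop Gop
  apply intervalIntegral.integral_congr
  intro τ hτ
  rw [uIcc_of_le hat] at hτ
  simp only [sub_right_inj]
  apply intervalIntegral.integral_congr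
  intro r hr
  rw [uIcc_of_le hτ.1] at hr
  simp only
  rw [h r ⟨hr.1, hr.2.trans hτ.2⟩]

lemma Jop_lip (a : ℝ) {w : ℝ → ℝ} (hw : Integrable w) {F : ℝ → ℝ → ℝ}
    (hF : Continuous (fun p : ℝ × ℝ => F p.1 p.2)) {M : ℝ} (hM : ∀ t x, |F t x| ≤ M)
    {v : ℝ → ℝ} (hv : Continuous v) (s x y : ℝ) :
    |Jop a w F s v x - Jop a w F s v y| ≤ (|s| + M * ∫ r, |w r|) * |x - y| := by
  have hc : Continuous (fun τ => s - Gop a w F v τ) :=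
    continuous_const.sub (Gop_cont a hw hF hM hv)
  unfold Jop
  rw [intervalIntegral.integral_interval_sub_left (hc.intervalIntegrable _ _)
    (hc.intervalIntegrable _ _)]
  rw [← Real.norm_eq_abs]
  apply intervalIntegral.norm_integral_le_of_norm_le_const
  intro τ _
  exact (abs_sub _ _).trans (add_le_add le_rfl (Gop_bound a hw hF hM hv τ))

/-- The delayed problem. -/
lemma delayed (a b : ℝ) (hab : a < b) {w : ℝ → ℝ} (hw : Integrable w) {F : ℝ → ℝ → ℝ}
    (hF : Continuous (fun p : ℝ × ℝ => F p.1 p.2)) {M : ℝ} (hM : ∀ t x, |F t x| ≤ M)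
    (h : ℝ) (hh : 0 < h) :
    ∃ (v : ℝ → ℝ) (s : ℝ), Continuous v ∧ |s| ≤ M * ∫ r, |w r| ∧ v b = 0 ∧
      ∀ t ∈ Icc a b, v t = Jop a w F s (fun r => v (max a (r - h))) t := by
  set P : ℝ → (ℝ → ℝ) → (ℝ → ℝ) := fun s v => Jop a w F s (fun r => v (max a (r - h))) with hP
  have hρ : Continuous (fun r : ℝ => max a (r - h)) := by fun_prop
  have hcont : ∀ k s, Continuous ((P s)^[k] 0) := by
    intro k s
    induction k with
    | zero => exact continuous_const
    | succ k ih =>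
      rw [Function.iterate_succ_apply']
      exact Jop_cont a hw hF hM (ih.comp hρ) s
  have hconts : ∀ k t, a ≤ t → Continuous (fun s => (P s)^[k] 0 t) := by
    intro k
    induction k with
    | zero => intro t _; exact continuous_const
    | succ k ih =>
      intro t ht
      simp only [Function.iterate_succ_apply']
      rw [continuous_iff_continuousAt]
      intro s0
      apply Jop_tendsto a hw hF hM (fun s => (hcont k s).comp hρ) tendsto_id ht
      intro r _
      exact (ih (max a (r - h)) (le_max_left _ _)).tendsto s0
  have hstab : ∀ (k : ℕ) (s : ℝ), ∀ t ∈ Icc a (a + k * h), (P s)^[k+1] 0 t = (P s)^[k] 0 t := by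
    intro k s
    induction k with
    | zero =>
      intro t ht
      have : t = a := by
        have := ht.1; have := ht.2; simp at this; linarith
      subst this
      simp [hP, Jop]
    | succ k ih =>
      intro t ht
      rw [Function.iterate_succ_apply', Function.iterate_succ_apply' _ k]
      apply Jop_congr _ _ _ _ ht.1
      intro r hr
      rw [← Function.iterate_succ_apply' (P s)]
      apply ih
      refine ⟨le_max_left _ _, max_le ?_ ?_⟩
      · have : 0 ≤ (k:ℝ) * h := by positivity
        linarith
      · have := ht.2; have := hr.2; push_cast at *; linarith
  obtain ⟨N, hN⟩ := exists_nat_gt ((b - a) / h)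
  have hN' : b ≤ a + N * h := by
    rw [div_lt_iff₀ hh] at hN; linarith
  set W := M * ∫ r, |w r| with hW
  have hfix : ∀ s, ∀ t ∈ Icc a b, (P s)^[N] 0 t = P s ((P s)^[N] 0) t := by
    intro s t ht
    rw [← Function.iterate_succ_apply' (P s), hstab N s t ⟨ht.1, ht.2.trans hN'⟩]
  have hval : ∀ s, |(P s)^[N] 0 b - s * (b - a)| ≤ W * (b - a) := by
    intro s
    rw [hfix s b ⟨hab.le, le_rfl⟩]
    have hc := Gop_cont a hw hF hM ((hcont N s).comp hρ)
    have he : P s ((P s)^[N] 0) b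
        = ∫ τ in a..b, (s - Gop a w F ((P s)^[N] 0 ∘ fun r => max a (r - h)) τ) := rfl
    rw [he, intervalIntegral.integral_sub intervalIntegrable_const (hc.intervalIntegrable _ _),
      intervalIntegral.integral_const, smul_eq_mul, mul_comm s, sub_sub_cancel_left, abs_neg]
    have := intervalIntegral.norm_integral_le_of_norm_le_const (a := a) (b := b)
      (f := Gop a w F ((P s)^[N] 0 ∘ fun r => max a (r - h))) (C := W)
      (fun τ _ => Gop_bound a hw hF hM ((hcont N s).comp hρ) τ)
    rwa [abs_of_pos (sub_pos.2 hab)] at this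
  have hW0 : 0 ≤ W := mul_nonneg ((abs_nonneg _).trans (hM 0 0))
    (integral_nonneg fun _ => abs_nonneg _)
  obtain ⟨s, hs, hs0⟩ : ∃ s ∈ Icc (-W) W, (P s)^[N] 0 b = 0 := by
    have := intermediate_value_Icc (a := -W) (b := W) (by linarith)
      (hconts N b hab.le).continuousOn
    apply this
    have h1 := abs_le.1 (hval (-W))
    have h2 := abs_le.1 (hval W)
    constructor
    · linarith
    · linarith
  exact ⟨(P s)^[N] 0, s, hcont N s, abs_le.2 hs, hs0, hfix s⟩

lemma bvp (a b : ℝ) (hab : a < b) {w : ℝ → ℝ} (hw : Integrable w) {F : ℝ → ℝ → ℝ}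
    (hF : Continuous (fun p : ℝ × ℝ => F p.1 p.2)) {M : ℝ} (hM : ∀ t x, |F t x| ≤ M) :
    ∃ (v : ℝ → ℝ) (s : ℝ), Continuous v ∧ v b = 0 ∧
      ∀ t ∈ Icc a b, v t = Jop a w F s v t := by
  have hpos : ∀ n : ℕ, (0:ℝ) < 1 / ((n:ℝ) + 1) := fun n => by positivity
  choose v s hvc hs hvb hv using fun n : ℕ => delayed a b hab hw hF hM _ (hpos n)
  set W := M * ∫ r, |w r| with hW
  have hW0 : 0 ≤ W := mul_nonneg ((abs_nonneg _).trans (hM 0 0))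
    (integral_nonneg fun _ => abs_nonneg _)
  have hρ : ∀ n : ℕ, Continuous (fun r : ℝ => max a (r - 1 / ((n:ℝ) + 1))) := by
    intro n; fun_prop
  have hlip : ∀ n, ∀ x ∈ Icc a b, ∀ y ∈ Icc a b, |v n x - v n y| ≤ 2 * W * |x - y| := by
    intro n x hx y hy
    rw [hv n x hx, hv n y hy]
    refine (Jop_lip a hw hF hM ((hvc n).comp (hρ n)) (s n) x y).trans ?_
    apply mul_le_mul_of_nonneg_right _ (abs_nonneg _)
    have := hs n
    linarith
  let B : ℕ → BoundedContinuousFunction (Icc a b) ℝ := fun n =>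
    BoundedContinuousFunction.mkOfCompact ⟨fun x => v n x, (hvc n).comp continuous_subtype_val⟩
  have hB : ∀ n (x : Icc a b), B n x = v n x := fun n x => rfl
  have hLB : ∀ n, LipschitzWith (2 * W).toNNReal (B n) := by
    intro n
    apply LipschitzWith.of_dist_le_mul
    intro x y
    rw [Real.coe_toNNReal _ (by positivity)]
    exact hlip n x x.2 y y.2
  have hcomp : IsCompact (closure (range B)) := by
    apply BoundedContinuousFunction.arzela_ascoli
      (Icc (-(2 * W * (b - a))) (2 * W * (b - a))) isCompact_Icc
    · rintro _ x ⟨n, rfl⟩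
      rw [hB, mem_Icc, ← abs_le]
      have h1 := hlip n x x.2 b ⟨hab.le, le_rfl⟩
      rw [hvb, sub_zero] at h1
      refine h1.trans (mul_le_mul_of_nonneg_left ?_ (by positivity))
      have := x.2.1
      have := x.2.2
      rw [abs_le]; constructor <;> linarith
    · apply UniformEquicontinuous.equicontinuous
      apply LipschitzWith.uniformEquicontinuous _ (2 * W).toNNReal
      rintro ⟨_, n, rfl⟩
      exact hLB n
  obtain ⟨⟨U, s0⟩, -, φ, hφ, hlim⟩ := (hcomp.prod (isCompact_Icc (a := -W) (b := W))).tendsto_subseq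
    (x := fun n => (B n, s n)) (fun n => ⟨subset_closure ⟨n, rfl⟩, abs_le.1 (hs n)⟩)
  rw [Prod.tendsto_iff] at hlim
  obtain ⟨hl1, hl2⟩ := hlim
  simp only [Function.comp_def] at hl1 hl2
  have hpt : ∀ x (hx : x ∈ Icc a b), Tendsto (fun n => v (φ n) x) atTop (𝓝 (U ⟨x, hx⟩)) := by
    intro x hx
    exact (BoundedContinuousFunction.tendsto_iff_tendstoUniformly.1 hl1).tendsto_at ⟨x, hx⟩
  have huE : ∀ x (hx : x ∈ Icc a b), IccExtend hab.le U x = U ⟨x, hx⟩ :=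
    fun x hx => IccExtend_of_mem hab.le U hx
  have hbm : b ∈ Icc a b := ⟨hab.le, le_rfl⟩
  refine ⟨IccExtend hab.le U, s0, U.continuous.Icc_extend', ?_, ?_⟩
  · rw [huE b hbm]
    refine tendsto_nhds_unique (hpt b hbm) ?_
    simp only [hvb]
    exact tendsto_const_nhds
  · intro t ht
    rw [huE t ht]
    refine tendsto_nhds_unique (hpt t ht) ?_
    have : ∀ n, v (φ n) t = Jop a w F (s (φ n))
      (fun r => v (φ n) (max a (r - 1 / ((φ n : ℝ) + 1)))) t := fun n => hv (φ n) t ht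
    simp only [this]
    apply Jop_tendsto a hw hF hM (fun n => (hvc (φ n)).comp (hρ (φ n))) hl2 ht.1
    intro r hr
    have hr' : r ∈ Icc a b := ⟨hr.1, hr.2.trans ht.2⟩
    rw [huE r hr']
    have hd : Tendsto (fun n => v (φ n) (max a (r - 1 / ((φ n : ℝ) + 1))) - v (φ n) r)
        atTop (𝓝 0) := by
      apply squeeze_zero_norm (a := fun n => 2 * W * (1 / ((φ n : ℝ) + 1)))
      · intro n
        have hp := hpos (φ n)
        have hm : max a (r - 1 / ((φ n : ℝ) + 1)) ≤ r := max_le hr.1 (by linarith)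
        refine (hlip (φ n) _ ⟨le_max_left _ _, hm.trans hr'.2⟩ r hr').trans ?_
        apply mul_le_mul_of_nonneg_left _ (by positivity)
        have := le_max_right a (r - 1 / ((φ n : ℝ) + 1))
        rw [abs_le]; constructor <;> linarith
      · have := (tendsto_one_div_add_atTop_nhds_zero_nat (𝕜 := ℝ)).comp hφ.tendsto_atTop
        simpa [Function.comp_def] using this.const_mul (2 * W)
    simpa using hd.add (hpt r hr')

lemma comparison (a b : ℝ) {p q : ℝ → ℝ} (hp : ContinuousOn p (Icc a b))
    (hq : ContinuousOn q (Icc a b))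
    (hp1 : ∀ t ∈ Ioo a b, DifferentiableAt ℝ p t) (hq1 : ∀ t ∈ Ioo a b, DifferentiableAt ℝ q t)
    (hp2 : ∀ t ∈ Ioo a b, DifferentiableAt ℝ (deriv p) t)
    (hq2 : ∀ t ∈ Ioo a b, DifferentiableAt ℝ (deriv q) t)
    (h : ∀ t ∈ Ioo a b, q t < p t → deriv (deriv q) t ≤ deriv (deriv p) t)
    (ha : p a ≤ q a) (hb : p b ≤ q b) : ∀ t ∈ Icc a b, p t ≤ q t := by
  intro t ht
  by_contra! hlt
  have hcl : ∀ x y, Icc x y ⊆ Icc a b → IsCompact (Icc x y ∩ {z | p z ≤ q z}) := by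
    intro x y hxy
    have : IsClosed (Icc x y ∩ {z | p z ≤ q z}) :=
      isClosed_Icc.isClosed_le (hp.mono hxy) (hq.mono hxy)
    exact isCompact_Icc.of_isClosed_subset this inter_subset_left
  obtain ⟨c, ⟨hc1, hc2⟩, hc⟩ := (hcl a t (Icc_subset_Icc le_rfl ht.2)).exists_isGreatest
    ⟨a, ⟨le_rfl, ht.1⟩, ha⟩
  obtain ⟨d, ⟨hd1, hd2⟩, hd⟩ := (hcl t b (Icc_subset_Icc ht.1 le_rfl)).exists_isLeast
    ⟨b, ⟨ht.2, le_rfl⟩, hb⟩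
  simp only [mem_ofPred_eq] at hc2 hd2
  have hsub : Icc c d ⊆ Icc a b := Icc_subset_Icc hc1.1 hd1.2
  have hsub' : Ioo c d ⊆ Ioo a b := Ioo_subset_Ioo hc1.1 hd1.2
  have hpos : ∀ x ∈ Ioo c d, q x < p x := by
    intro x hx
    by_contra! hx'
    rcases le_total x t with hxt | hxt
    · have := hc ⟨⟨hc1.1.trans hx.1.le, hxt⟩, hx'⟩
      linarith [hx.1]
    · have := hd ⟨⟨hxt, hx.2.le.trans hd1.2⟩, hx'⟩
      linarith [hx.2]
  have hder : ∀ x ∈ Ioo a b, deriv (fun z => p z - q z) =ᶠ[𝓝 x] fun z => deriv p z - deriv q z := by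
    intro x hx
    filter_upwards [isOpen_Ioo.mem_nhds hx] with z hz
    exact deriv_fun_sub (hp1 z hz) (hq1 z hz)
  have hconv : ConvexOn ℝ (Icc c d) (fun z => p z - q z) := by
    apply convexOn_of_deriv2_nonneg (convex_Icc c d)
    · exact (hp.mono hsub).sub (hq.mono hsub)
    · rw [interior_Icc]
      intro x hx
      exact ((hp1 x (hsub' hx)).sub (hq1 x (hsub' hx))).differentiableWithinAt
    · rw [interior_Icc]
      intro x hx
      have := (hp2 x (hsub' hx)).fun_sub (hq2 x (hsub' hx))
      exact ((hder x (hsub' hx)).differentiableAt_iff.2 this).differentiableWithinAt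
    · rw [interior_Icc]
      intro x hx
      change 0 ≤ deriv (deriv (fun z => p z - q z)) x
      rw [(hder x (hsub' hx)).deriv_eq, deriv_fun_sub (hp2 x (hsub' hx)) (hq2 x (hsub' hx))]
      have := h x (hsub' hx) (hpos x hx)
      linarith
  have hcd : c ≤ d := hc1.2.trans hd1.1
  have := hconv.le_max_of_mem_Icc (x := c) (y := d) (z := t) ⟨le_rfl, hcd⟩ ⟨hcd, le_rfl⟩
    ⟨hc1.2, hd1.1⟩
  rcases le_max_iff.1 this with h' | h' <;> linarith

/-- Upper and lower solutions method for the conformable Dirichlet problem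
`(t-a)^(2-α) u'' + f(t,u) = 0`, `u(a) = u(b) = 0`: given a lower solution `σl`
and an upper solution `σu` with `σl ≤ σu`, both in `AC²[a,b]` (C¹ with
absolutely continuous first derivative, encoded via the FTC for the second
derivative) and twice differentiable on `(a,b)`, and `f` continuous on the
region `E` between `σl` and `σu`, there exists a solution `u` of the same
regularity with `σl ≤ u ≤ σu` on `[a,b]`. -/
theorem exists_solution_between_lower_and_upper
    (a b α : ℝ) (hab : a < b) (hα1 : 1 < α) (hα2 : α < 2)
    (σl σu : ℝ → ℝ) (f : ℝ → ℝ → ℝ)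
    (hσl1 : ContDiffOn ℝ 1 σl (Set.Icc a b))
    (hσlint : IntervalIntegrable (deriv (deriv σl)) volume a b)
    (hσlFTC : ∀ c ∈ Set.Icc a b, ∀ d ∈ Set.Icc a b,
      deriv σl d - deriv σl c = ∫ s in c..d, deriv (deriv σl) s)
    (hσl2 : ∀ t ∈ Set.Ioo a b, DifferentiableAt ℝ (deriv σl) t)
    (hσu1 : ContDiffOn ℝ 1 σu (Set.Icc a b))
    (hσuint : IntervalIntegrable (deriv (deriv σu)) volume a b)
    (hσuFTC : ∀ c ∈ Set.Icc a b, ∀ d ∈ Set.Icc a b,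
      deriv σu d - deriv σu c = ∫ s in c..d, deriv (deriv σu) s)
    (hσu2 : ∀ t ∈ Set.Ioo a b, DifferentiableAt ℝ (deriv σu) t)
    (hle : ∀ t ∈ Set.Icc a b, σl t ≤ σu t)
    (hf : ContinuousOn (fun p : ℝ × ℝ => f p.1 p.2)
      {p : ℝ × ℝ | p.1 ∈ Set.Icc a b ∧ σl p.1 ≤ p.2 ∧ p.2 ≤ σu p.1})
    (hlow : ∀ t ∈ Set.Ioo a b,
      0 ≤ (t - a) ^ (2 - α) * deriv (deriv σl) t + f t (σl t))
    (hla : σl a ≤ 0) (hlb : σl b ≤ 0)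
    (hup : ∀ t ∈ Set.Ioo a b,
      (t - a) ^ (2 - α) * deriv (deriv σu) t + f t (σu t) ≤ 0)
    (hua : 0 ≤ σu a) (hub : 0 ≤ σu b) :
    ∃ u : ℝ → ℝ,
      ContDiffOn ℝ 1 u (Set.Icc a b) ∧
      IntervalIntegrable (deriv (deriv u)) volume a b ∧
      (∀ c ∈ Set.Icc a b, ∀ d ∈ Set.Icc a b,
        deriv u d - deriv u c = ∫ s in c..d, deriv (deriv u) s) ∧
      (∀ t ∈ Set.Ioo a b, DifferentiableAt ℝ (deriv u) t) ∧
      (∀ t ∈ Set.Ioo a b,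
        (t - a) ^ (2 - α) * deriv (deriv u) t + f t (u t) = 0) ∧
      u a = 0 ∧ u b = 0 ∧
      ∀ t ∈ Set.Icc a b, σl t ≤ u t ∧ u t ≤ σu t := by
  have hlc := hσl1.continuousOn
  have huc := hσu1.continuousOn
  have hdiff : ∀ σ : ℝ → ℝ, ContDiffOn ℝ 1 σ (Icc a b) → ∀ t ∈ Ioo a b, DifferentiableAt ℝ σ t :=
    fun σ hσ t ht => (hσ.differentiableOn one_ne_zero).differentiableAt (Icc_mem_nhds ht.1 ht.2)
  -- the truncated nonlinearity
  let π : ℝ → ℝ := fun t => max a (min b t)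
  have hπc : Continuous π := by fun_prop
  have hπm : ∀ t, π t ∈ Icc a b := fun t => ⟨le_max_left _ _, max_le hab.le (min_le_left _ _)⟩
  have hπe : ∀ t ∈ Icc a b, π t = t := by
    intro t ht
    simp only [π]
    rw [min_eq_right ht.2, max_eq_right ht.1]
  let C : ℝ → ℝ → ℝ := fun t x => max (σl (π t)) (min (σu (π t)) x)
  have hlπ : Continuous fun t => σl (π t) := hlc.comp_continuous hπc hπm
  have huπ : Continuous fun t => σu (π t) := huc.comp_continuous hπc hπm
  have hCc : Continuous fun p : ℝ × ℝ => C p.1 p.2 :=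
    (hlπ.comp continuous_fst).max ((huπ.comp continuous_fst).min continuous_snd)
  have hCl : ∀ t x, σl (π t) ≤ C t x := fun t x => le_max_left _ _
  have hCu : ∀ t x, C t x ≤ σu (π t) := fun t x => max_le (hle _ (hπm t)) (min_le_left _ _)
  let F : ℝ → ℝ → ℝ := fun t x => f (π t) (C t x)
  have hF : Continuous fun p : ℝ × ℝ => F p.1 p.2 :=
    hf.comp_continuous (f := fun p : ℝ × ℝ => (π p.1, C p.1 p.2))
      ((hπc.comp continuous_fst).prodMk hCc) fun p => ⟨hπm _, hCl _ _, hCu _ _⟩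
  obtain ⟨M, hM⟩ : ∃ M, ∀ t x, |F t x| ≤ M := by
    obtain ⟨R1, hR1⟩ := isCompact_Icc.exists_bound_of_continuousOn hlc
    obtain ⟨R2, hR2⟩ := isCompact_Icc.exists_bound_of_continuousOn huc
    obtain ⟨M, hM⟩ := ((isCompact_Icc (a := a) (b := b)).prod
      (isCompact_Icc (a := -R1) (b := R2))).exists_bound_of_continuousOn hF.continuousOn
    refine ⟨M, fun t x => ?_⟩
    have h1 := abs_le.1 (hR1 _ (hπm t))
    have h2 := abs_le.1 (hR2 _ (hπm t))
    have h3 := hM (π t, C t x) ⟨hπm t, h1.1.trans (hCl t x), (hCu t x).trans h2.2⟩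
    have h4 : F (π t) (C t x) = F t x := by
      have e1 : π (π t) = π t := hπe _ (hπm t)
      have e2 : C (π t) (C t x) = C t x := by
        change max (σl (π (π t))) (min (σu (π (π t))) (C t x)) = C t x
        rw [e1, min_eq_right (hCu t x), max_eq_right (hCl t x)]
      change f (π (π t)) (C (π t) (C t x)) = f (π t) (C t x)
      rw [e1, e2]
    simp only [h4] at h3
    exact h3
  -- the weight
  let w : ℝ → ℝ := (Ioc a b).indicator fun t => (t - a) ^ (α - 2)
  have hw : Integrable w := by
    have h1 : IntervalIntegrable (fun x : ℝ => x ^ (α - 2)) volume (a - a) (b - a) :=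
      intervalIntegral.intervalIntegrable_rpow' (by linarith)
    have h2 := (h1.comp_sub_right a)
    simp only [sub_add_cancel] at h2
    rw [intervalIntegrable_iff_integrableOn_Ioc_of_le hab.le] at h2
    exact (integrable_indicator_iff measurableSet_Ioc).2 h2
  obtain ⟨v, s, hvc, hvb, hv⟩ := bvp a b hab hw hF hM
  set u : ℝ → ℝ := Jop a w F s v with hu
  have hud : ∀ t, HasDerivAt u (s - Gop a w F v t) t := fun t => Jop_hasDeriv a hw hF hM hvc s t
  have hudf : deriv u = fun t => s - Gop a w F v t := funext fun t => (hud t).deriv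
  have hGc : Continuous (Gop a w F v) := Gop_cont a hw hF hM hvc
  have hgi := g_integrable hw hF hM hvc
  have hgc : ∀ t ∈ Ioo a b, ContinuousAt (fun r => w r * F r (v r)) t := by
    intro t ht
    have hwt : ContinuousAt w t := by
      have : w =ᶠ[𝓝 t] fun t => (t - a) ^ (α - 2) := by
        filter_upwards [isOpen_Ioo.mem_nhds ht] with z hz
        exact indicator_of_mem (Ioo_subset_Ioc_self hz) _
      refine ContinuousAt.congr ?_ this.symm
      exact (continuousAt_id.sub continuousAt_const).rpow_const (Or.inl (sub_pos.2 ht.1).ne')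
    exact hwt.mul (hF.comp (continuous_id.prodMk hvc)).continuousAt
  have hudd : ∀ t ∈ Ioo a b, HasDerivAt (deriv u) (-(w t * F t (v t))) t := by
    intro t ht
    rw [hudf]
    have : HasDerivAt (Gop a w F v) (w t * F t (v t)) t :=
      intervalIntegral.integral_hasDerivAt_right hgi.intervalIntegrable
        (hgi.aestronglyMeasurable.stronglyMeasurableAtFilter) (hgc t ht)
    exact this.const_sub s
  have huv : ∀ t ∈ Icc a b, u t = v t := fun t ht => (hv t ht).symm
  have hucd : ContDiff ℝ 1 u := by
    rw [contDiff_one_iff_deriv]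
    refine ⟨fun t => (hud t).differentiableAt, ?_⟩
    rw [hudf]
    exact continuous_const.sub hGc
  have hae : ∀ c ∈ Icc a b, ∀ d ∈ Icc a b, ∀ᵐ x ∂(volume : Measure ℝ), x ∈ uIoc c d →
      deriv (deriv u) x = -(w x * F x (v x)) := by
    intro c hc d hd
    have hne : ∀ᵐ x ∂(volume : Measure ℝ), x ≠ b := by
      simp [ae_iff, measure_singleton]
    filter_upwards [hne] with x hxb hx
    have h1 : a < x := lt_of_le_of_lt (le_min hc.1 hd.1) hx.1
    have h2 : x ≤ b := hx.2.trans (max_le hc.2 hd.2)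
    exact (hudd x ⟨h1, lt_of_le_of_ne h2 hxb⟩).deriv
  have hode : ∀ t ∈ Ioo a b, (t - a) ^ (2 - α) * deriv (deriv u) t + F t (u t) = 0 := by
    intro t ht
    rw [(hudd t ht).deriv, huv t (Ioo_subset_Icc_self ht)]
    have hwt : w t = (t - a) ^ (α - 2) := indicator_of_mem (Ioo_subset_Ioc_self ht) _
    have hpos : 0 < t - a := sub_pos.2 ht.1
    have : (t - a) ^ (2 - α) * (t - a) ^ (α - 2) = 1 := by
      rw [← Real.rpow_add hpos]; simp
    rw [hwt]
    linear_combination (-F t (v t)) * this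
  have hua0 : u a = 0 := by simp [hu, Jop]
  have hub0 : u b = 0 := by rw [huv b ⟨hab.le, le_rfl⟩, hvb]
  have hle_u : ∀ t ∈ Icc a b, u t ≤ σu t := by
    apply comparison a b hucd.continuous.continuousOn huc
      (fun t _ => (hud t).differentiableAt) (hdiff σu hσu1)
      (fun t ht => (hudd t ht).differentiableAt) hσu2
    · intro t ht hlt
      have htI := Ioo_subset_Icc_self ht
      have hc : 0 < (t - a) ^ (2 - α) := Real.rpow_pos_of_pos (sub_pos.2 ht.1) _
      have h1 := hode t ht
      have h2 := hup t ht
      have hFt : F t (u t) = f t (σu t) := by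
        change f (π t) (max (σl (π t)) (min (σu (π t)) (u t))) = _
        rw [hπe t htI, min_eq_left hlt.le, max_eq_right (hle t htI)]
      rw [hFt] at h1
      exact le_of_mul_le_mul_left (by linarith) hc
    · rw [hua0]; exact hua
    · rw [hub0]; exact hub
  have hle_l : ∀ t ∈ Icc a b, σl t ≤ u t := by
    apply comparison a b hlc hucd.continuous.continuousOn
      (hdiff σl hσl1) (fun t _ => (hud t).differentiableAt)
      hσl2 (fun t ht => (hudd t ht).differentiableAt)
    · intro t ht hlt
      have htI := Ioo_subset_Icc_self ht
      have hc : 0 < (t - a) ^ (2 - α) := Real.rpow_pos_of_pos (sub_pos.2 ht.1) _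
      have h1 := hode t ht
      have h2 := hlow t ht
      have hFt : F t (u t) = f t (σl t) := by
        change f (π t) (max (σl (π t)) (min (σu (π t)) (u t))) = _
        rw [hπe t htI, max_eq_left ((min_le_right _ _).trans hlt.le)]
      rw [hFt] at h1
      exact le_of_mul_le_mul_left (by linarith) hc
    · rw [hua0]; exact hla
    · rw [hub0]; exact hlb
  refine ⟨u, hucd.contDiffOn, ?_, ?_, fun t ht => (hudd t ht).differentiableAt, ?_, hua0, hub0,
    fun t ht => ⟨hle_l t ht, hle_u t ht⟩⟩
  · refine IntervalIntegrable.congr_ae (f := fun x => -(w x * F x (v x)))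
      hgi.neg.intervalIntegrable ?_
    rw [EventuallyEq, ae_restrict_iff' measurableSet_uIoc]
    filter_upwards [hae a ⟨le_rfl, hab.le⟩ b ⟨hab.le, le_rfl⟩] with x hx hx'
    exact (hx hx').symm
  · intro c hc d hd
    rw [intervalIntegral.integral_congr_ae (hae c hc d hd), intervalIntegral.integral_neg, hudf]
    have := intervalIntegral.integral_interval_sub_left (a := a) (b := d) (c := c) (μ := volume)
      (f := fun x => w x * F x (v x)) hgi.intervalIntegrable hgi.intervalIntegrable
    simp only [Gop]
    linarith
  · intro t ht
    have htI := Ioo_subset_Icc_self ht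
    have h1 := hode t ht
    have hFt : F t (u t) = f t (u t) := by
      change f (π t) (max (σl (π t)) (min (σu (π t)) (u t))) = _
      rw [hπe t htI, min_eq_right (hle_u t htI), max_eq_right (hle_l t htI)]
    rwa [hFt] at h1
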